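/- Let G₁ and G₂ be two graphs (2-uniform hypergraphs) on n vertices. If |E(G₁)| + |E(G₂)| ≤ ⌈3n/2⌉ − 2, then G₁ and G₂ pack. -/

import Mathlib

open Finset

/-- A family of edges is `k`-uniform if every edge has exactly `k` vertices. -/
def Uniform (k : ℕ) {V : Type*} (E : Finset (Finset V)) : Prop :=
  ∀ e ∈ E, e.card = k

/-- Two hypergraphs (given by their edge sets) pack if there is a bijection of the
vertex sets mapping every edge of the first to a non-edge of the second. -/
def Packs {V₁ V₂ : Type*} [DecidableEq V₂]
    (E₁ : Finset (Finset V₁)) (E₂ : Finset (Finset V₂)) : Prop :=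
  ∃ f : V₁ ≃ V₂, ∀ e ∈ E₁, e.image f ∉ E₂

/-- `maxDeg l E` is `Δ_l(H)`: the maximum, over `l`-element vertex subsets `U`,
of the number of edges containing `U`. -/
def maxDeg {V : Type*} [Fintype V] [DecidableEq V] (l : ℕ) (E : Finset (Finset V)) : ℕ :=
  (Finset.univ.powersetCard l).sup fun U => (E.filter fun e => U ⊆ e).card

/-- A `t`-`(n, k, lam)` design: a family of `k`-element subsets such that every
`t`-element vertex subset is contained in exactly `lam` members. -/
def IsDesign (t k lam : ℕ) {V : Type*} [Fintype V] [DecidableEq V]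
    (T : Finset (Finset V)) : Prop :=
  (∀ e ∈ T, e.card = k) ∧
  ∀ S : Finset V, S.card = t → (T.filter fun e => S ⊆ e).card = lam

/-- `mMin n k` is the minimum possible value of `|E(H₁)| + |E(H₂)|` over all pairs of
`k`-uniform hypergraphs `H₁`, `H₂` on `n` vertices that do not pack. -/
noncomputable def mMin (n k : ℕ) : ℕ :=
  sInf {m | ∃ E₁ E₂ : Finset (Finset (Fin n)), Uniform k E₁ ∧ Uniform k E₂ ∧
    ¬ Packs E₁ E₂ ∧ E₁.card + E₂.card = m}

/-!
The argument is an induction on `n` with hypothesis `2 * (e(G) + e(H)) + 3 ≤ 3 * n`. Place a union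
`S` of components of one graph on an independent set `T` of the other, and pack the remaining
vertices by induction. No edge between `S` and the rest can cause a conflict, and the bound survives
if `3 * |S|` is at most the degree sum over `S` plus twice the degree sum over `T`. If either graph
has an isolated edge or an isolated vertex, that can serve as `S`, with `T` of degree sum at least
two. Otherwise the sparser graph satisfies `4 * e < 3 * n`, which forces a component that is a path
on three vertices, while the denser graph has at least three leaves, which are pairwise nonadjacent.
-/

section Packing

variable {V W : Type*}

/-- Packing of simple graphs: some bijection of the vertex sets sends edges of `G` to non-edges of
`H`. This is the counterpart for `SimpleGraph` of `Packs` for families of pairs. -/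
def GraphPacks (G : SimpleGraph V) (H : SimpleGraph W) : Prop :=
  ∃ f : V ≃ W, ∀ a b, G.Adj a b → ¬ H.Adj (f a) (f b)

variable {G : SimpleGraph V} {H : SimpleGraph W}

theorem GraphPacks.symm (h : GraphPacks G H) : GraphPacks H G := by
  obtain ⟨f, hf⟩ := h
  exact ⟨f.symm, fun a b hH hG ↦ hf _ _ hG (by simpa using hH)⟩

theorem GraphPacks.of_induce {s : Set V} {t : Set W} (hs : ∀ v ∈ s, G.neighborSet v ⊆ s)
    (hin : GraphPacks (G.induce s) (H.induce t))
    (hout : GraphPacks (G.induce sᶜ) (H.induce tᶜ)) : GraphPacks G H := by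
  classical
  obtain ⟨g, hg⟩ := hin
  obtain ⟨f, hf⟩ := hout
  refine ⟨(Equiv.Set.sumCompl s).symm.trans ((Equiv.sumCongr g f).trans (Equiv.Set.sumCompl t)),
    fun a b hab ↦ ?_⟩
  by_cases ha : a ∈ s
  · have hb : b ∈ s := hs a ha hab
    simpa [Equiv.Set.sumCompl_symm_apply_of_mem, ha, hb] using hg ⟨a, ha⟩ ⟨b, hb⟩ hab
  · have hb : b ∉ s := fun hb ↦ ha (hs b hb hab.symm)
    simpa [Equiv.Set.sumCompl_symm_apply_of_notMem, ha, hb] using hf ⟨a, ha⟩ ⟨b, hb⟩ hab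

variable [Fintype V] [Fintype W]

theorem graphPacks_bot_right (hcard : Fintype.card V = Fintype.card W) :
    GraphPacks G (⊥ : SimpleGraph W) :=
  ⟨Fintype.equivOfCardEq hcard, fun _ _ _ ↦ id⟩

theorem exists_equiv_apply_eq_apply_eq (hcard : Fintype.card V = Fintype.card W) {p q : V}
    {u v : W} (hpq : p ≠ q) (huv : u ≠ v) : ∃ f : V ≃ W, f p = u ∧ f q = v := by
  let e := Fintype.equivOfCardEq hcard
  obtain ⟨σ, hp, hq⟩ := MulAction.is_two_pretransitive_iff.mp
    (Equiv.Perm.isMultiplyPretransitive W 2) (e.injective.ne hpq) huv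
  exact ⟨e.trans σ, hp, hq⟩

theorem graphPacks_of_card_edgeFinset_eq_one [Fintype H.edgeSet]
    (hcard : Fintype.card V = Fintype.card W) (hG : G ≠ ⊤) (hH : #H.edgeFinset = 1) :
    GraphPacks G H := by
  obtain ⟨p, q, hpq, hnadj⟩ := SimpleGraph.ne_top_iff_exists_not_adj.mp hG
  obtain ⟨⟨u, v⟩, he⟩ := card_eq_one.mp hH
  have adj_iff (a b : W) : H.Adj a b ↔ s(a, b) = s(u, v) := by
    rw [← SimpleGraph.mem_edgeSet, ← SimpleGraph.mem_edgeFinset, he, mem_singleton]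
  obtain ⟨f, rfl, rfl⟩ := exists_equiv_apply_eq_apply_eq hcard hpq ((adj_iff u v).mpr rfl).ne
  refine ⟨f, fun a b hab hf ↦ hnadj ?_⟩
  have hedge : s(a, b) = s(p, q) :=
    Sym2.map.injective f.injective (by simpa using (adj_iff _ _).mp hf)
  rwa [← SimpleGraph.mem_edgeSet, ← hedge]

end Packing

section EdgeCount

variable {V : Type*} [Fintype V] {G : SimpleGraph V} [DecidableRel G.Adj]

theorem ne_top_of_two_mul_card_edgeFinset_add_five_le
    (h : 2 * #G.edgeFinset + 5 ≤ 3 * Fintype.card V) : G ≠ ⊤ := by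
  classical
  rintro rfl
  have hchoose : #(⊤ : SimpleGraph V).edgeFinset = (Fintype.card V).choose 2 := by
    convert SimpleGraph.card_edgeFinset_top_eq_card_choose_two (V := V)
  obtain ⟨m, hm⟩ : ∃ m, Fintype.card V = m + 1 := Nat.exists_eq_add_one.mpr (by omega)
  rw [hchoose, Nat.choose_two_right, Nat.two_mul_div_two_of_even (Nat.even_mul_pred_self _), hm,
    Nat.add_sub_cancel] at h
  nlinarith [sq_nonneg ((m : ℤ) - 1)]

theorem eq_of_adj_of_adj_of_degree_le_one {u v w : V} (hw : G.degree w ≤ 1) (hu : G.Adj w u)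
    (hv : G.Adj w v) : u = v :=
  card_le_one.mp hw u (by simpa using hu) v (by simpa using hv)

theorem exists_not_adj_two_le_degree_add_degree (hG : G ≠ ⊤) (hE : 2 ≤ #G.edgeFinset) :
    ∃ u v, u ≠ v ∧ ¬ G.Adj u v ∧ 2 ≤ G.degree u + G.degree v := by
  by_cases hdeg : ∃ v, 2 ≤ G.degree v
  · obtain ⟨v, hv⟩ := hdeg
    by_cases hdom : ∃ u, u ≠ v ∧ ¬ G.Adj u v
    · obtain ⟨u, huv, hnadj⟩ := hdom
      exact ⟨u, v, huv, hnadj, by omega⟩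
    · push Not at hdom
      obtain ⟨p, q, hpq, hnadj⟩ := SimpleGraph.ne_top_iff_exists_not_adj.mp hG
      have hpv : G.Adj p v := hdom p fun h ↦ hnadj (h ▸ (hdom q (h ▸ hpq.symm)).symm)
      have hqv : G.Adj q v := hdom q fun h ↦ hnadj (h ▸ hpv)
      exact ⟨p, q, hpq, hnadj, Nat.add_le_add hpv.degree_pos_left hqv.degree_pos_left⟩
  · have hle (v : V) : G.degree v ≤ 1 := by
      by_contra! hv
      exact hdeg ⟨v, hv⟩
    obtain ⟨⟨a, b⟩, hab, ⟨c, d⟩, hcd, hne⟩ := one_lt_card.mp hE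
    replace hab : G.Adj a b := by simpa using hab
    replace hcd : G.Adj c d := by simpa using hcd
    refine ⟨a, c, ?_, fun hac ↦ ?_, Nat.add_le_add hab.degree_pos_left hcd.degree_pos_left⟩
    · rintro rfl
      exact hne (by rw [eq_of_adj_of_adj_of_degree_le_one (hle a) hab hcd])
    · obtain rfl := eq_of_adj_of_adj_of_degree_le_one (hle a) hab hac
      obtain rfl := eq_of_adj_of_adj_of_degree_le_one (hle b) hab.symm hcd
      exact hne Sym2.eq_swap

variable [DecidableEq V]

theorem sum_degree_add_two_mul_card_edgeFinset_induce_compl_le (S : Finset V) :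
    ∑ v ∈ S, G.degree v + 2 * #(G.induce ↑(Sᶜ)).edgeFinset ≤ 2 * #G.edgeFinset := by
  rw [← SimpleGraph.sum_degrees_eq_twice_card_edges, ← SimpleGraph.sum_degrees_eq_twice_card_edges,
    ← sum_add_sum_compl S, ← sum_coe_sort Sᶜ]
  gcongr with v
  exact (SimpleGraph.Embedding.induce _).toCopy.degree_le v

theorem sum_degree_add_card_edgeFinset_induce_compl_le {T : Finset V} (hT : G.IsIndepSet T) :
    ∑ v ∈ T, G.degree v + #(G.induce ↑(Tᶜ)).edgeFinset ≤ #G.edgeFinset := by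
  have hdisj : (T : Set V).PairwiseDisjoint (G.incidenceFinset ·) := fun a ha b hb hab ↦
    Finset.disjoint_left.mpr fun e hea heb ↦ hT ha hb hab
      (G.adj_of_mem_incidenceSet hab (by simpa using hea) (by simpa using heb))
  have hdisj' : Disjoint (T.biUnion (G.incidenceFinset ·))
      {e ∈ G.edgeFinset | e.toFinset ⊆ Tᶜ} := by
    simp only [Finset.disjoint_left, mem_biUnion, mem_filter, SimpleGraph.incidenceFinset_eq_filter]
    rintro e ⟨v, hv, -, hve⟩ ⟨-, hsub⟩
    exact mem_compl.mp (hsub (Sym2.mem_toFinset.mpr hve)) hv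
  simp_rw [← SimpleGraph.card_incidenceFinset_eq_degree]
  rw [← card_biUnion hdisj, ← SimpleGraph.card_filter_edgeFinset_toFinset_subset,
    ← card_union_of_disjoint hdisj']
  exact card_le_card (union_subset (biUnion_subset.mpr fun v _ ↦ G.incidenceFinset_subset v)
    (filter_subset _ _))

end EdgeCount

section Leaves

variable {V : Type*} [Fintype V] (G : SimpleGraph V) [DecidableRel G.Adj]

/-- The number of neighbours of `v` that are leaves, that is, have degree one. -/
def leafDegree (v : V) : ℕ :=
  #{w ∈ G.neighborFinset v | G.degree w = 1}

/-- `G` has a component consisting of a single edge. -/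
def HasIsolatedEdge : Prop :=
  ∃ u v, G.Adj u v ∧ G.degree u = 1 ∧ G.degree v = 1

theorem leafDegree_le_degree (v : V) : leafDegree G v ≤ G.degree v :=
  card_filter_le _ _

theorem sum_leafDegree : ∑ v, leafDegree G v = #{v | G.degree v = 1} := by
  let leaves : Finset V := {v | G.degree v = 1}
  calc ∑ v, leafDegree G v
      = ∑ v, #(leaves.bipartiteAbove G.Adj v) := by
        refine sum_congr rfl fun v _ ↦ congrArg card ?_
        ext w
        simp [leaves, and_comm]
    _ = ∑ w ∈ leaves, #(univ.bipartiteBelow G.Adj w) :=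
        sum_card_bipartiteAbove_eq_sum_card_bipartiteBelow _
    _ = ∑ w ∈ leaves, G.degree w := by
        simp [bipartiteBelow, G.adj_comm _, ← G.card_neighborFinset_eq_degree,
          G.neighborFinset_eq_filter]
    _ = #leaves := by
        rw [card_eq_sum_ones]
        exact sum_congr rfl fun w hw ↦ (mem_filter.mp hw).2

variable {G}

theorem degree_eq_one_of_leafDegree_eq_degree {v w : V} (hv : leafDegree G v = G.degree v)
    (hvw : G.Adj v w) : G.degree w = 1 :=
  card_filter_eq_iff.mp hv w (by simpa using hvw)

theorem leafDegree_eq_zero_of_degree_eq_one (hG : ¬ HasIsolatedEdge G) {v : V}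
    (hv : G.degree v = 1) : leafDegree G v = 0 := by
  rw [leafDegree, card_eq_zero, filter_eq_empty_iff]
  exact fun w hw hleaf ↦ hG ⟨v, w, by simpa using hw, hv, hleaf⟩

theorem isIndepSet_setOf_degree_eq_one (hG : ¬ HasIsolatedEdge G) :
    G.IsIndepSet {v | G.degree v = 1} :=
  fun u hu v hv _ huv ↦ hG ⟨u, v, huv, hu, hv⟩

theorem exists_two_le_degree (hG : ¬ HasIsolatedEdge G) (hne : G ≠ ⊥) : ∃ v, 2 ≤ G.degree v := by
  by_contra! hlt
  obtain ⟨u, v, huv⟩ := SimpleGraph.ne_bot_iff_exists_adj.mp hne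
  have degree_eq_one {w : V} (hw : 0 < G.degree w) : G.degree w = 1 :=
    le_antisymm (Nat.lt_succ_iff.mp (hlt w)) hw
  exact hG ⟨u, v, huv, degree_eq_one huv.degree_pos_left, degree_eq_one huv.degree_pos_right⟩

theorem card_le_two_mul_card_edgeFinset (hG : ∀ v, ¬ G.IsIsolated v) :
    Fintype.card V ≤ 2 * #G.edgeFinset := by
  rw [← G.sum_degrees_eq_twice_card_edges, ← card_univ, card_eq_sum_ones]
  gcongr with v
  exact (G.degree_pos v).mpr (hG v)

theorem two_mul_card_le_two_mul_card_edgeFinset_add_card_leaves (hG : ∀ v, ¬ G.IsIsolated v) :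
    2 * Fintype.card V ≤ 2 * #G.edgeFinset + #{v | G.degree v = 1} := by
  have hvertex (v : V) : 2 ≤ G.degree v + if G.degree v = 1 then 1 else 0 := by
    have := (G.degree_pos v).mpr (hG v)
    split_ifs <;> omega
  calc 2 * Fintype.card V = ∑ _v : V, 2 := by simp [mul_comm]
    _ ≤ ∑ v, (G.degree v + if G.degree v = 1 then 1 else 0) := sum_le_sum fun v _ ↦ hvertex v
    _ = 2 * #G.edgeFinset + #{v | G.degree v = 1} := by
      rw [sum_add_distrib, G.sum_degrees_eq_twice_card_edges, card_filter]

-- Discharging: a vertex `v` has charge `2 * deg v - 3`, and every leaf takes one unit from its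
-- neighbour. With no vertex of degree two next to two leaves, all final charges are nonnegative.
theorem exists_degree_eq_two_forall_adj_degree_eq_one (hG : ∀ v, ¬ G.IsIsolated v)
    (hedge : ¬ HasIsolatedEdge G) (hcard : 4 * #G.edgeFinset < 3 * Fintype.card V) :
    ∃ v, G.degree v = 2 ∧ ∀ w, G.Adj v w → G.degree w = 1 := by
  suffices ∃ v, G.degree v = 2 ∧ leafDegree G v = G.degree v by
    obtain ⟨v, hv, hleaf⟩ := this
    exact ⟨v, hv, fun w ↦ degree_eq_one_of_leafDegree_eq_degree hleaf⟩
  by_contra! hno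
  have hcharge (v : V) :
      3 + leafDegree G v ≤ 2 * G.degree v + if G.degree v = 1 then 1 else 0 := by
    have hpos := (G.degree_pos v).mpr (hG v)
    have hle := leafDegree_le_degree G v
    have hno := hno v
    have hleaf := leafDegree_eq_zero_of_degree_eq_one hedge (v := v)
    split_ifs <;> omega
  have hsum := sum_le_sum fun v (_ : v ∈ univ) ↦ hcharge v
  simp only [sum_add_distrib, sum_leafDegree, ← mul_sum, G.sum_degrees_eq_twice_card_edges,
    ← card_filter, sum_const, card_univ, smul_eq_mul] at hsum
  omega

end Leaves

section Reduction

variable {V W : Type*} [Fintype V] [Fintype W]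

/-- A pair of vertex sets that can be split off from a packing problem: `S` is a union of components
of `G`, to be placed on the independent set `T` of `H`. The last field says that the bound
`2 * (e(G) + e(H)) + 3 ≤ 3 * n` survives the removal of `S` and `T`. -/
structure IsReduction (G : SimpleGraph V) (H : SimpleGraph W) [DecidableRel G.Adj]
    [DecidableRel H.Adj] (S : Finset V) (T : Finset W) : Prop where
  nonempty : S.Nonempty
  card_eq : #S = #T
  neighborSet_subset : ∀ v ∈ S, G.neighborSet v ⊆ S
  isIndepSet : H.IsIndepSet T
  three_mul_card_le : 3 * #S ≤ ∑ v ∈ S, G.degree v + 2 * ∑ w ∈ T, H.degree w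

variable {G : SimpleGraph V} {H : SimpleGraph W} [DecidableRel G.Adj] [DecidableRel H.Adj]

namespace IsReduction

variable [DecidableEq V] [DecidableEq W] {S : Finset V} {T : Finset W}

theorem graphPacks (h : IsReduction G H S T)
    (hout : GraphPacks (G.induce ↑(Sᶜ)) (H.induce ↑(Tᶜ))) : GraphPacks G H := by
  rw [coe_compl, coe_compl] at hout
  refine .of_induce h.neighborSet_subset ?_ hout
  have hbot : H.induce (T : Set W) = ⊥ := by
    ext a b
    simpa using fun hab ↦ h.isIndepSet a.2 b.2 hab.ne hab
  exact hbot ▸ graphPacks_bot_right (by simpa using h.card_eq)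

theorem two_mul_card_edgeFinset_induce_add_three_le (h : IsReduction G H S T)
    (hcard : 2 * (#G.edgeFinset + #H.edgeFinset) + 3 ≤ 3 * Fintype.card V) :
    2 * (#(G.induce ↑(Sᶜ)).edgeFinset + #(H.induce ↑(Tᶜ)).edgeFinset) + 3 ≤ 3 * #Sᶜ := by
  have hS := sum_degree_add_two_mul_card_edgeFinset_induce_compl_le (G := G) S
  have hT := sum_degree_add_card_edgeFinset_induce_compl_le h.isIndepSet
  have := h.three_mul_card_le
  have := card_add_card_compl S
  omega

end IsReduction

theorem isReduction_singleton {v : V} {w : W} (hv : G.IsIsolated v) (hw : 2 ≤ H.degree w) :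
    IsReduction G H {v} {w} where
  nonempty := singleton_nonempty v
  card_eq := rfl
  neighborSet_subset := by
    simp only [mem_singleton, forall_eq, hv.neighborSet_eq_empty, Set.empty_subset]
  isIndepSet := by simp [SimpleGraph.isIndepSet_iff]
  three_mul_card_le := by
    simp only [card_singleton, sum_singleton]
    omega

theorem exists_isReduction_of_isIsolated {v : V} (hG : G.IsIsolated v)
    (hedge : ¬ HasIsolatedEdge H) (hH : H ≠ ⊥) : ∃ S T, IsReduction G H S T := by
  obtain ⟨w, hw⟩ := exists_two_le_degree hedge hH
  exact ⟨_, _, isReduction_singleton hG hw⟩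

theorem graphPacks_of_card_edgeFinset_le_one (hcard : Fintype.card V = Fintype.card W)
    (hE : 2 * (#G.edgeFinset + #H.edgeFinset) + 3 ≤ 3 * Fintype.card V)
    (hH : #H.edgeFinset ≤ 1) : GraphPacks G H := by
  obtain hzero | hone := Nat.le_one_iff_eq_zero_or_eq_one.mp hH
  · rw [card_eq_zero, SimpleGraph.edgeFinset_eq_empty] at hzero
    exact hzero ▸ graphPacks_bot_right hcard
  · exact graphPacks_of_card_edgeFinset_eq_one hcard
      (ne_top_of_two_mul_card_edgeFinset_add_five_le (by omega)) hone

theorem isReduction_insert_neighborFinset [DecidableEq V] {y : V} {T : Finset W}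
    (hy : G.degree y = 2) (hleaf : ∀ x, G.Adj y x → G.degree x = 1) (hcard : #T = 3)
    (hT : H.IsIndepSet T) (hdeg : ∀ w ∈ T, H.degree w = 1) :
    IsReduction G H (insert y (G.neighborFinset y)) T := by
  have hy_notMem : y ∉ G.neighborFinset y := G.notMem_neighborFinset_self y
  have hS : #(insert y (G.neighborFinset y)) = 3 := by
    rw [card_insert_of_notMem hy_notMem, G.card_neighborFinset_eq_degree, hy]
  have hsumG : ∑ v ∈ insert y (G.neighborFinset y), G.degree v = 4 := by
    rw [sum_insert hy_notMem,
      sum_congr rfl fun x hx ↦ hleaf x ((G.mem_neighborFinset y x).mp hx), ← card_eq_sum_ones,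
      G.card_neighborFinset_eq_degree, hy]
  have hsumH : ∑ w ∈ T, H.degree w = 3 := by
    rw [sum_congr rfl hdeg, ← card_eq_sum_ones, hcard]
  refine ⟨insert_nonempty y _, hS.trans hcard.symm, ?_, hT, by omega⟩
  simp only [mem_insert, SimpleGraph.mem_neighborFinset, coe_insert,
    SimpleGraph.coe_neighborFinset, forall_eq_or_imp, Set.subset_insert, true_and]
  exact fun x hyx w hxw ↦
    .inl (eq_of_adj_of_adj_of_degree_le_one (hleaf x hyx).le hxw hyx.symm)

theorem exists_isReduction_of_forall_not_isIsolated (hcard : Fintype.card V = Fintype.card W)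
    (hE : 2 * (#G.edgeFinset + #H.edgeFinset) + 3 ≤ 3 * Fintype.card V)
    (hle : #G.edgeFinset ≤ #H.edgeFinset) (hedgeG : ¬ HasIsolatedEdge G)
    (hedgeH : ¬ HasIsolatedEdge H) (hisoG : ∀ v, ¬ G.IsIsolated v) (hisoH : ∀ w, ¬ H.IsIsolated w) :
    ∃ S T, IsReduction G H S T := by
  classical
  obtain ⟨y, hy, hleaf⟩ :=
    exists_degree_eq_two_forall_adj_degree_eq_one hisoG hedgeG (by omega)
  have hleaves : 3 ≤ #{w | H.degree w = 1} := by
    have := card_le_two_mul_card_edgeFinset hisoG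
    have := two_mul_card_le_two_mul_card_edgeFinset_add_card_leaves hisoH
    omega
  obtain ⟨T, hTleaves, hT⟩ := exists_subset_card_eq hleaves
  have hdeg : ∀ w ∈ T, H.degree w = 1 := fun w hw ↦ (mem_filter.mp (hTleaves hw)).2
  exact ⟨_, T, isReduction_insert_neighborFinset hy hleaf hT
    ((isIndepSet_setOf_degree_eq_one hedgeH).mono hdeg) hdeg⟩

theorem isReduction_pair [DecidableEq V] [DecidableEq W] {x y : V} {u v : W} (hxy : G.Adj x y)
    (hx : G.degree x = 1) (hy : G.degree y = 1) (huv : u ≠ v) (hnadj : ¬ H.Adj u v)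
    (hdeg : 2 ≤ H.degree u + H.degree v) : IsReduction G H {x, y} {u, v} where
  nonempty := insert_nonempty x _
  card_eq := by rw [card_pair hxy.ne, card_pair huv]
  neighborSet_subset := by
    simp only [mem_insert, mem_singleton, coe_pair, forall_eq_or_imp, forall_eq]
    exact ⟨fun w hw ↦ .inr (eq_of_adj_of_adj_of_degree_le_one hx.le hw hxy),
      fun w hw ↦ .inl (eq_of_adj_of_adj_of_degree_le_one hy.le hw hxy.symm)⟩
  isIndepSet := by
    rw [coe_pair, SimpleGraph.isIndepSet_iff, Set.pairwise_pair]
    exact fun _ ↦ ⟨hnadj, fun h ↦ hnadj h.symm⟩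
  three_mul_card_le := by
    rw [card_pair hxy.ne, sum_pair hxy.ne, sum_pair huv]
    omega

theorem exists_isReduction_of_hasIsolatedEdge (hG : HasIsolatedEdge G) (hH : H ≠ ⊤)
    (hE : 2 ≤ #H.edgeFinset) : ∃ S T, IsReduction G H S T := by
  classical
  obtain ⟨x, y, hxy, hx, hy⟩ := hG
  obtain ⟨u, v, huv, hnadj, hdeg⟩ := exists_not_adj_two_le_degree_add_degree hH hE
  exact ⟨_, _, isReduction_pair hxy hx hy huv hnadj hdeg⟩

theorem exists_isReduction_or_exists_isReduction_of_le (hcard : Fintype.card V = Fintype.card W)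
    (hE : 2 * (#G.edgeFinset + #H.edgeFinset) + 3 ≤ 3 * Fintype.card V)
    (hG : 2 ≤ #G.edgeFinset) (hle : #G.edgeFinset ≤ #H.edgeFinset) :
    (∃ S T, IsReduction G H S T) ∨ ∃ T S, IsReduction H G T S := by
  by_cases hedgeG : HasIsolatedEdge G
  · exact .inl (exists_isReduction_of_hasIsolatedEdge hedgeG
      (ne_top_of_two_mul_card_edgeFinset_add_five_le (by omega)) (by omega))
  by_cases hedgeH : HasIsolatedEdge H
  · exact .inr (exists_isReduction_of_hasIsolatedEdge hedgeH
      (ne_top_of_two_mul_card_edgeFinset_add_five_le (by omega)) hG)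
  by_cases hisoG : ∃ v, G.IsIsolated v
  · obtain ⟨v, hv⟩ := hisoG
    exact .inl (exists_isReduction_of_isIsolated hv hedgeH
      (SimpleGraph.edgeFinset_nonempty.mp (card_pos.mp (by omega))))
  by_cases hisoH : ∃ w, H.IsIsolated w
  · obtain ⟨w, hw⟩ := hisoH
    exact .inr (exists_isReduction_of_isIsolated hw hedgeG
      (SimpleGraph.edgeFinset_nonempty.mp (card_pos.mp (by omega))))
  push Not at hisoG hisoH
  exact .inl (exists_isReduction_of_forall_not_isIsolated hcard hE hle hedgeG hedgeH hisoG hisoH)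

theorem graphPacks_of_two_mul_card_edgeFinset_add_three_le
    (hcard : Fintype.card V = Fintype.card W)
    (hE : 2 * (#G.edgeFinset + #H.edgeFinset) + 3 ≤ 3 * Fintype.card V) : GraphPacks G H := by
  classical
  induction hn : Fintype.card V using Nat.strong_induction_on generalizing V W with
  | _ n ih =>
  by_cases hH : #H.edgeFinset ≤ 1
  · exact graphPacks_of_card_edgeFinset_le_one hcard hE hH
  by_cases hG : #G.edgeFinset ≤ 1
  · exact (graphPacks_of_card_edgeFinset_le_one hcard.symm (by omega) hG).symm
  have hreduction : (∃ S T, IsReduction G H S T) ∨ ∃ T S, IsReduction H G T S := by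
    obtain hle | hle := le_total #G.edgeFinset #H.edgeFinset
    · exact exists_isReduction_or_exists_isReduction_of_le hcard hE (by omega) hle
    · exact (exists_isReduction_or_exists_isReduction_of_le hcard.symm (by omega) (by omega)
        hle).symm
  have ih_compl {S : Finset V} {T : Finset W} (hS : S.Nonempty) (hST : #S = #T)
      (hE : 2 * (#(G.induce ↑(Sᶜ)).edgeFinset + #(H.induce ↑(Tᶜ)).edgeFinset) + 3 ≤ 3 * #Sᶜ) :
      GraphPacks (G.induce ↑(Sᶜ)) (H.induce ↑(Tᶜ)) := by
    have hlt : #Sᶜ < n := hn ▸ (card_compl_lt_iff_nonempty S).mpr hS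
    have hcompl : #Sᶜ = #Tᶜ := by rw [card_compl, card_compl, hcard, hST]
    exact ih #Sᶜ hlt (by simpa only [coe_sort_coe, Fintype.card_coe] using hcompl)
      (by simpa only [coe_sort_coe, Fintype.card_coe] using hE)
      (by simp only [coe_sort_coe, Fintype.card_coe])
  obtain ⟨S, T, hST⟩ | ⟨T, S, hTS⟩ := hreduction
  · exact hST.graphPacks (ih_compl hST.nonempty hST.card_eq
      (hST.two_mul_card_edgeFinset_induce_add_three_le hE))
  · have hS : S.Nonempty := card_pos.mp (hTS.card_eq ▸ hTS.nonempty.card_pos)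
    have hcompl : #Sᶜ = #Tᶜ := by rw [card_compl, card_compl, hcard, hTS.card_eq]
    have hE_compl := hTS.two_mul_card_edgeFinset_induce_add_three_le (by omega)
    exact (hTS.graphPacks (ih_compl hS hTS.card_eq.symm (by omega)).symm).symm

end Reduction

section PairFamilies

variable {V W : Type*}

/-- The graph whose edges are the pairs belonging to `E`. -/
def pairGraph [DecidableEq V] (E : Finset (Finset V)) : SimpleGraph V :=
  .fromEdgeSet {e | e.toFinset ∈ E}

variable [DecidableEq V] [DecidableEq W]

theorem pairGraph_adj {E : Finset (Finset V)} {a b : V} :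
    (pairGraph E).Adj a b ↔ {a, b} ∈ E ∧ a ≠ b := by
  simp [pairGraph, Sym2.toFinset_mk_eq]

theorem card_edgeFinset_pairGraph_le (E : Finset (Finset V)) [Fintype (pairGraph E).edgeSet] :
    #(pairGraph E).edgeFinset ≤ #E := by
  refine card_le_card_of_injOn Sym2.toFinset (fun e he ↦ ?_) fun e _ e' _ h ↦ ?_
  · induction e with | _ a b
    simpa [Sym2.toFinset_mk_eq] using (pairGraph_adj.mp (by simpa using he)).1
  · exact Sym2.ext fun x ↦ by rw [← Sym2.mem_toFinset, h, Sym2.mem_toFinset]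

theorem GraphPacks.packs {E₁ : Finset (Finset V)} {E₂ : Finset (Finset W)} (hE₁ : Uniform 2 E₁)
    (h : GraphPacks (pairGraph E₁) (pairGraph E₂)) : Packs E₁ E₂ := by
  obtain ⟨f, hf⟩ := h
  refine ⟨f, fun e he himage ↦ ?_⟩
  obtain ⟨a, b, hab, rfl⟩ := card_eq_two.mp (hE₁ e he)
  rw [image_insert, image_singleton] at himage
  exact hf a b (pairGraph_adj.mpr ⟨he, hab⟩) (pairGraph_adj.mpr ⟨himage, f.injective.ne hab⟩)

end PairFamilies

theorem le_ceil_three_mul_div_two_sub_two_iff {m n : ℕ} :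
    (m : ℤ) ≤ ⌈(3 * (n : ℚ)) / 2⌉ - 2 ↔ 2 * m + 3 ≤ 3 * n := by
  rw [le_sub_iff_add_le, ← one_add_one_eq_two, ← add_assoc, Int.add_one_le_iff, Int.lt_ceil,
    lt_div_iff₀ (by norm_num)]
  norm_cast
  omega

theorem stmt_9_general {V W : Type*} [Fintype V] [Fintype W] [DecidableEq W]
    (hcard : Fintype.card V = Fintype.card W) (E₁ : Finset (Finset V)) (E₂ : Finset (Finset W))
    (hE₁ : Uniform 2 E₁) (h : (#E₁ + #E₂ : ℤ) ≤ ⌈(3 * (Fintype.card V : ℚ)) / 2⌉ - 2) :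
    Packs E₁ E₂ := by
  classical
  have hE : 2 * (#E₁ + #E₂) + 3 ≤ 3 * Fintype.card V :=
    le_ceil_three_mul_div_two_sub_two_iff.mp (by exact_mod_cast h)
  have hE₁_le := card_edgeFinset_pairGraph_le E₁
  have hE₂_le := card_edgeFinset_pairGraph_le E₂
  exact (graphPacks_of_two_mul_card_edgeFinset_add_three_le hcard (by omega)).packs hE₁

/-- if `|E(G₁)| + |E(G₂)| ≤ ⌈3n/2⌉ − 2` then the two graphs (2-uniform
hypergraphs) on `n` vertices pack. -/
theorem stmt_9 (n : ℕ)
    (E₁ E₂ : Finset (Finset (Fin n))) (h₁ : Uniform 2 E₁) (h₂ : Uniform 2 E₂)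
    (h : (E₁.card + E₂.card : ℤ) ≤ ⌈(3 * (n : ℚ)) / 2⌉ - 2) :
    Packs E₁ E₂ :=
  stmt_9_general rfl E₁ E₂ h₁ (by rwa [Fintype.card_fin])
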